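/- Let X and Y be V-categories. For every presheaf ξ on X ⊗ Y and every (x,y) ∈ X × Y, ξ(x,y) = ⨆_{φ ∈ DX, ψ ∈ DY} (⨅_{x',y'} [φ(x') ⊗ ψ(y'), ξ(x',y')]) ⊗ φ(x) ⊗ ψ(y). (This expresses that the V-functor d₂ : DX ⊗ DY → D(X ⊗ Y), d₂(φ,ψ)(x,y) := φ(x) ⊗ ψ(y), is dense: every presheaf on X ⊗ Y is the canonical weighted colimit of presheaves of the form d₂(φ,ψ).) -/

import Mathlib

/-! Every term of the supremum is at most `ξ (x, y)` by evaluating the infimum at `(x, y)` and using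
the counit `[v,w] ⊗ v ≤ w`. Conversely the supremum is attained at the representables
`φ = X(·,x)`, `ψ = Y(·,y)`: the presheaf inequality for `ξ` says exactly that
`ξ (x, y) ≤ [X(x',x) ⊗ Y(y',y), ξ (x', y')]`, and `X(x,x)`, `Y(y,y)` are at least the unit. -/

/- `V` is a commutative quantale: a complete lattice with a commutative monoid
structure `(*, 1)` distributing over arbitrary suprema. -/
variable {V : Type*} [CommMonoid V] [CompleteLattice V] [IsQuantale V]

/-- The internal hom `[v,w]` of the commutative quantale `V`. -/
def qhom (v w : V) : V := sSup {u | u * v ≤ w}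

/-- `hX` is a `V`-category structure on `X`. -/
def IsVCat {X : Type*} (hX : X → X → V) : Prop :=
  (∀ x, 1 ≤ hX x x) ∧ (∀ x y z, hX x y * hX y z ≤ hX x z)

/-- A contravariant presheaf on the `V`-category `(X, hX)`. -/
def IsPsh {X : Type*} (hX : X → X → V) (φ : X → V) : Prop :=
  ∀ x y, hX x y * φ y ≤ φ x

/-- `DX hX`: the set of all contravariant presheaves on `(X, hX)`. -/
def DX {X : Type*} (hX : X → X → V) := {φ : X → V // IsPsh hX φ}

/-- The hom of the presheaf `V`-category, on underlying functions:
`pshHom φ ψ = ⨅ x, [φ x, ψ x]`. -/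
def pshHom {X : Type*} (φ ψ : X → V) : V := ⨅ x, qhom (φ x) (ψ x)

/-- The hom of the presheaf `V`-category `DX hX`. -/
def DHom {X : Type*} (hX : X → X → V) (φ ψ : DX hX) : V := pshHom φ.1 ψ.1

/-- The Yoneda embedding `y_X(x) = X(·,x)`. -/
def yoneda {X : Type*} (hX : X → X → V) (h : IsVCat hX) (x : X) : DX hX :=
  ⟨fun x' => hX x' x, fun a b => h.2 a b x⟩

theorem le_qhom_iff {u v w : V} : u ≤ qhom v w ↔ u * v ≤ w := by
  refine ⟨fun h => (mul_le_mul_left h v).trans ?_, fun h => le_sSup h⟩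
  rw [qhom, sSup_mul_distrib]
  exact iSup₂_le fun _ h => h

/-- For `V`-categories `X`, `Y` and a presheaf `ξ` on `X ⊗ Y`,
`ξ(x,y) = ⨆_{φ ∈ DX, ψ ∈ DY} (⨅_{x',y'} [φ(x') ⊗ ψ(y'), ξ(x',y')]) ⊗ φ(x) ⊗ ψ(y)`;
i.e. `d₂ : DX ⊗ DY → D(X ⊗ Y)` is dense. -/
theorem stmt2 {X Y : Type*} (hX : X → X → V) (hY : Y → Y → V)
    (hcX : IsVCat hX) (hcY : IsVCat hY)
    (ξ : X × Y → V)
    (hξ : IsPsh (fun p q : X × Y => hX p.1 q.1 * hY p.2 q.2) ξ)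
    (x : X) (y : Y) :
    ξ (x, y) = ⨆ φ : DX hX, ⨆ ψ : DX hY,
      (⨅ x', ⨅ y', qhom (φ.1 x' * ψ.1 y') (ξ (x', y'))) * φ.1 x * ψ.1 y := by
  apply le_antisymm
  · refine le_trans ?_ (le_iSup₂ (yoneda hX hcX x) (yoneda hY hcY y))
    have h : ξ (x, y) ≤ ⨅ x', ⨅ y', qhom (hX x' x * hY y' y) (ξ (x', y')) :=
      le_iInf₂ fun x' y' => le_qhom_iff.2 (by
        rw [mul_comm]
        exact hξ (x', y') (x, y))
    calc ξ (x, y) = ξ (x, y) * 1 * 1 := by rw [mul_one, mul_one]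
      _ ≤ _ := mul_le_mul' (mul_le_mul' h (hcX.1 x)) (hcY.1 y)
  · refine iSup₂_le fun φ ψ => ?_
    rw [mul_assoc, ← le_qhom_iff]
    exact (iInf_le _ x).trans (iInf_le _ y)
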